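/- arXiv:1311.7441 — 5 statements merged into one kernel-verified Lean document; each statement's English description precedes it below -/
import Mathlib

section
/- Let H be a Hopf algebra over a field k with antipode S, and suppose that the square of the antipode has odd finite order, i.e. (S ∘ S)^(2k-1) = id for some integer k ≥ 1. Then the map σ := (S ∘ S)^k is a bialgebra automorphism of H satisfying σ ∘ σ = S ∘ S; in particular H is almost involutive. -/
open Coalgebra HopfAlgebra TensorProduct

/-!
The antipode `S` is an algebra antihomomorphism and, dually, a coalgebra antihomomorphism:
`Δ ∘ S` is a right convolution inverse of `Δ`, and writing `Δ = ι₁ * ι₂` as a convolution product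
of the two inclusions `A → A ⊗ A`, the map `(S ⊗ S) ∘ τ ∘ Δ = (ι₂ ∘ S) * (ι₁ ∘ S)`, where `τ` is
the swap, is a left one, because `(f ∘ S) * f = 1` for every algebra homomorphism `f`.
Hence `φ = S ∘ S` is a bialgebra endomorphism, and if `φ ^ (2 * n - 1) = 1` then `φ ^ n` is
inverse to `φ ^ (n - 1)` and squares to `φ ^ (2 * n) = φ`.
-/

section Convolution

open Algebra.TensorProduct (includeLeft includeRight)
open WithConv

variable {R A B C : Type*} [CommSemiring R] [Semiring A] [Semiring B] [Algebra R B]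

section Coalgebra

variable [Algebra R A] [AddCommMonoid C] [Module R C] [CoalgebraStruct R C]

lemma toConv_map_comp_comul (f : C →ₗ[R] A) (g : C →ₗ[R] B) :
    toConv (map f g ∘ₗ comul) =
      toConv ((includeLeft : A →ₐ[R] A ⊗[R] B).toLinearMap ∘ₗ f) *
        toConv ((includeRight : B →ₐ[R] A ⊗[R] B).toLinearMap ∘ₗ g) := by
  ext c
  rw [(ℛ R c).convMul_apply]
  simp [← (ℛ R c).eq]

lemma toConv_map_comp_comm_comp_comul (f : C →ₗ[R] A) (g : C →ₗ[R] B) :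
    toConv (map f g ∘ₗ (TensorProduct.comm R C C).toLinearMap ∘ₗ comul) =
      toConv ((includeRight : B →ₐ[R] A ⊗[R] B).toLinearMap ∘ₗ g) *
        toConv ((includeLeft : A →ₐ[R] A ⊗[R] B).toLinearMap ∘ₗ f) := by
  ext c
  rw [(ℛ R c).convMul_apply]
  simp [← (ℛ R c).eq]

end Coalgebra

variable [HopfAlgebra R A]

lemma toConv_comp_antipode_mul_toConv (f : A →ₐ[R] B) :
    toConv (f.toLinearMap ∘ₗ antipode R) * toConv f.toLinearMap = 1 := by
  have comp_one : f.toLinearMap ∘ₗ (1 : WithConv (A →ₗ[R] A)).ofConv =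
      (1 : WithConv (A →ₗ[R] B)).ofConv := by
    ext a
    simp
  apply ofConv_injective
  rw [← comp_one, ← LinearMap.antipode_mul_id, LinearMap.algHom_comp_convMul_distrib,
    ofConv_toConv, ofConv_toConv, LinearMap.comp_id]

lemma comul_comp_antipode :
    comul ∘ₗ antipode R (A := A) =
      map (antipode R) (antipode R) ∘ₗ (TensorProduct.comm R A A).toLinearMap ∘ₗ comul := by
  have comul_eq : toConv (comul (R := R) (A := A)) =
      toConv (includeLeft : A →ₐ[R] A ⊗[R] A).toLinearMap *
        toConv (includeRight : A →ₐ[R] A ⊗[R] A).toLinearMap := by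
    simpa using toConv_map_comp_comul (R := R) (C := A) .id .id
  have left_inv : toConv (map (antipode R) (antipode R) ∘ₗ
      (TensorProduct.comm R A A).toLinearMap ∘ₗ comul) * toConv (comul (R := R) (A := A)) = 1 := by
    rw [toConv_map_comp_comm_comp_comul, comul_eq, mul_assoc,
      ← mul_assoc _ (toConv includeLeft.toLinearMap), toConv_comp_antipode_mul_toConv, one_mul,
      toConv_comp_antipode_mul_toConv]
  exact (toConv_injective (left_inv_eq_right_inv left_inv LinearMap.comul_right_inv)).symm

end Convolution

section AntipodeSq

variable {R A : Type*} [CommSemiring R] [Semiring A] [HopfAlgebra R A]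

lemma comul_comp_antipode_comp_antipode :
    comul ∘ₗ antipode R ∘ₗ antipode R (A := A) =
      map (antipode R ∘ₗ antipode R) (antipode R ∘ₗ antipode R) ∘ₗ comul := by
  let S : A →ₗ[R] A := antipode R
  let τ : A ⊗[R] A →ₗ[R] A ⊗[R] A := (TensorProduct.comm R A A).toLinearMap
  have comul_antipode : comul ∘ₗ S = map S S ∘ₗ τ ∘ₗ comul := comul_comp_antipode
  have swap_map : τ ∘ₗ map S S = map S S ∘ₗ τ := by ext; rfl
  have swap_swap : τ ∘ₗ τ = .id := by ext; rfl
  calc comul ∘ₗ S ∘ₗ S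
    _ = (map S S ∘ₗ τ ∘ₗ comul) ∘ₗ S := by
      rw [← LinearMap.comp_assoc, comul_antipode]
    _ = map S S ∘ₗ (τ ∘ₗ map S S) ∘ₗ τ ∘ₗ comul := by
      simp only [LinearMap.comp_assoc, comul_antipode]
    _ = (map S S ∘ₗ map S S) ∘ₗ (τ ∘ₗ τ) ∘ₗ comul := by
      rw [swap_map]; simp only [LinearMap.comp_assoc]
    _ = map (S ∘ₗ S) (S ∘ₗ S) ∘ₗ comul := by
      rw [swap_swap, LinearMap.id_comp, TensorProduct.map_comp]

variable (R A) in
/-- The square `S ∘ S` of the antipode of a Hopf algebra, bundled as a bialgebra endomorphism so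
that its powers are taken in the monoid `A →ₐc[R] A`. -/
noncomputable def antipodeSq : A →ₐc[R] A :=
  .ofAlgHom
    (.ofLinearMap (antipode R ∘ₗ antipode R) (by simp) (by simp [antipode_mul_antidistrib]))
    (by ext; simp)
    (AlgHom.toLinearMap_injective comul_comp_antipode_comp_antipode.symm)

end AntipodeSq

section Powers

variable {R A : Type*} [CommSemiring R] [Semiring A] [Algebra R A] [CoalgebraStruct R A]

lemma bialgHom_coe_linearMap_pow (φ : A →ₐc[R] A) (n : ℕ) :
    ((φ ^ n : A →ₐc[R] A) : A →ₗ[R] A) = ((φ : A →ₗ[R] A) ^ n : Module.End R A) := by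
  induction n with
  | zero => rfl
  | succ n ih => rw [pow_succ, pow_succ, ← ih]; rfl

lemma exists_bialgEquiv_eq_pow_and_sq_eq (φ : A →ₐc[R] A) {n : ℕ} (hn : 1 ≤ n)
    (hφ : φ ^ (2 * n - 1) = 1) :
    ∃ σ : A ≃ₐc[R] A, (∀ x, σ x = (φ ^ n) x) ∧ ∀ x, σ (σ x) = φ x := by
  have mul_pred : φ ^ n * φ ^ (n - 1) = 1 := by
    rw [← pow_add, ← hφ]; congr 1; lia
  have pred_mul : φ ^ (n - 1) * φ ^ n = 1 := by
    rw [← pow_add, ← hφ]; congr 1; lia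
  have sq_eq : φ ^ n * φ ^ n = φ := calc
    φ ^ n * φ ^ n = φ ^ (2 * n - 1) * φ := by rw [← pow_add, ← pow_succ]; congr 1; lia
    _ = φ := by rw [hφ, one_mul]
  exact ⟨.ofBialgHom (φ ^ n) (φ ^ (n - 1)) mul_pred pred_mul, fun _ ↦ rfl,
    BialgHom.congr_fun sq_eq⟩

end Powers

theorem almostInvolutive_of_odd_order_antipode_sq_general
    {R A : Type*} [CommSemiring R] [Semiring A] [HopfAlgebra R A] {n : ℕ} (hn : 1 ≤ n)
    (hodd : ((antipode R (A := A) ∘ₗ antipode R) ^ (2 * n - 1) : Module.End R A) = 1) :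
    ∃ σ : A ≃ₐc[R] A,
      (∀ x : A, σ x = ((antipode R (A := A) ∘ₗ antipode R) ^ n : Module.End R A) x) ∧
      (∀ x : A, σ (σ x) = antipode R (antipode R x)) := by
  have antipodeSq_pow : antipodeSq R A ^ (2 * n - 1) = 1 :=
    BialgHom.coe_linearMap_injective ((bialgHom_coe_linearMap_pow _ _).trans hodd)
  obtain ⟨σ, σ_eq, σ_sq⟩ := exists_bialgEquiv_eq_pow_and_sq_eq (antipodeSq R A) hn antipodeSq_pow
  exact ⟨σ, fun x ↦ (σ_eq x).trans (LinearMap.congr_fun (bialgHom_coe_linearMap_pow _ n) x), σ_sq⟩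

/-- If the square of the antipode of a Hopf algebra `H` over a field `k`
satisfies `(S ∘ S)^(2n-1) = id` for some `n ≥ 1`, then `σ := (S ∘ S)^n` is a bialgebra
automorphism of `H` with `σ ∘ σ = S ∘ S`; in particular `H` is almost involutive. -/
theorem almostInvolutive_of_odd_order_antipode_sq
    (k : Type*) (H : Type*) [Field k] [Ring H] [HopfAlgebra k H]
    (n : ℕ) (hn : 1 ≤ n)
    (hodd : ((antipode (R := k) (A := H) ∘ₗ antipode (R := k)) ^ (2 * n - 1) :
      Module.End k H) = 1) :
    ∃ σ : H ≃ₐc[k] H,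
      (∀ x : H, σ x =
        ((antipode (R := k) (A := H) ∘ₗ antipode (R := k)) ^ n : Module.End k H) x) ∧
      (∀ x : H, σ (σ x) = antipode (R := k) (antipode (R := k) x)) :=
  almostInvolutive_of_odd_order_antipode_sq_general hn hodd
end

section
/- Let H be a Hopf algebra over a commutative ring with antipode S, let g, h ∈ H be grouplike elements, and let x ∈ H be (g,h)-primitive. Then for every natural number n, the n-th iterate of the square of the antipode satisfies (S∘S)^n (x) = (g·S(h))^n · x · (S(g)·h)^n. -/
open Coalgebra HopfAlgebra TensorProduct

/-!
The square of the antipode `S` is an algebra endomorphism fixing grouplike elements, so it is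
enough to show `S (S x) = (g * S h) * x * (S g * h)` and to iterate. Since the counit kills `x`, an
antipode axiom evaluated at `x` reads `S x * g + S h * x = 0`. Applying the antihomomorphism `S` to
it gives `S g * S (S x) + S x * h = 0`, while multiplying it by `S g * h` on the right gives
`S x * h + S h * x * (S g * h) = 0`. So `S g * S (S x)` and `S h * x * (S g * h)` are both additive
inverses of `S x * h`, hence equal.
-/

theorem iterate_map_eq_pow_mul_mul_pow {M F : Type*} [Monoid M] [FunLike F M M]
    [MonoidHomClass F M M] (φ : F) {u v x : M} (hu : φ u = u) (hv : φ v = v)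
    (hx : φ x = u * x * v) (n : ℕ) : φ^[n] x = u ^ n * x * v ^ n := by
  induction n with
  | zero => simp
  | succ n ih =>
    calc φ^[n + 1] x = φ (u ^ n * x * v ^ n) := by rw [Function.iterate_succ_apply', ih]
      _ = u ^ n * (u * x * v) * v ^ n := by simp only [map_mul, map_pow, hu, hv, hx]
      _ = u ^ (n + 1) * x * v ^ (n + 1) := by
        simp only [pow_succ u, pow_succ' v, mul_assoc]

section SkewPrimitive

variable {R A : Type*} [CommSemiring R]

variable (R) in
/-- A `(g, h)`-primitive (or skew-primitive) element of a coalgebra, with the convention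
`Δ(x) = x ⊗ g + h ⊗ x`. Being grouplike is not part of the definition: `g` and `h` are arbitrary. -/
def IsSkewPrimitiveElem [AddCommMonoid A] [Module R A] [Coalgebra R A] (g h x : A) : Prop :=
  comul (R := R) x = x ⊗ₜ[R] g + h ⊗ₜ[R] x

theorem IsSkewPrimitiveElem.counit_eq_zero [IsCancelAdd R] [AddCommMonoid A] [Module R A]
    [Coalgebra R A] {g h x : A} (hx : IsSkewPrimitiveElem R g h x)
    (hg : counit (R := R) g = 1) (hh : counit (R := R) h = 1) : counit (R := R) x = 0 := by
  have counit_smul_add : x + counit (R := R) x • h = x := by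
    have counit_axiom := lTensor_counit_comul (R := R) x
    rw [hx] at counit_axiom
    simpa [hg] using congrArg (TensorProduct.rid R A) counit_axiom
  simpa [hh] using congrArg (counit (R := R)) counit_smul_add

variable [Semiring A] [HopfAlgebra R A]

variable (R A) in
/-- The square `S ∘ S` of the antipode, bundled as an algebra endomorphism. -/
noncomputable def antipodeSqAlgHom : A →ₐ[R] A :=
  .ofLinearMap (antipode R ∘ₗ antipode R) (by simp) (by simp [antipode_mul_antidistrib])

theorem coe_antipodeSqAlgHom : ⇑(antipodeSqAlgHom R A) = antipode R ∘ antipode R := rfl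

namespace IsSkewPrimitiveElem

variable [IsCancelAdd R] {g h x : A}

theorem antipode_mul_add_antipode_mul_eq_zero (hx : IsSkewPrimitiveElem R g h x)
    (hg : counit (R := R) g = 1) (hh : counit (R := R) h = 1) :
    antipode R x * g + antipode R h * x = 0 := by
  have antipode_axiom := mul_antipode_rTensor_comul_apply (R := R) x
  rw [hx, hx.counit_eq_zero hg hh] at antipode_axiom
  simpa using antipode_axiom

theorem antipode_antipode (hx : IsSkewPrimitiveElem R g h x)
    (hg : IsGroupLikeElem R g) (hh : IsGroupLikeElem R h) :
    antipode R (antipode R x) = g * antipode R h * x * (antipode R g * h) := by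
  have relation : antipode R x * g + antipode R h * x = 0 :=
    hx.antipode_mul_add_antipode_mul_eq_zero hg.counit_eq_one hh.counit_eq_one
  have relation_antipode :
      antipode R g * antipode R (antipode R x) + antipode R x * h = 0 := by
    simpa [antipode_mul_antidistrib, hh.antipode_antipode] using congrArg (antipode R) relation
  have relation_mul : antipode R x * h + antipode R h * x * (antipode R g * h) = 0 := by
    calc antipode R x * h + antipode R h * x * (antipode R g * h)
        = antipode R x * (g * antipode R g) * h + antipode R h * x * (antipode R g * h) := by
          rw [hg.mul_antipode_cancel, mul_one]
      _ = (antipode R x * g + antipode R h * x) * (antipode R g * h) := by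
          simp only [add_mul, mul_assoc]
      _ = 0 := by rw [relation, zero_mul]
  calc antipode R (antipode R x) = g * (antipode R g * antipode R (antipode R x)) := by
        rw [← mul_assoc, hg.mul_antipode_cancel, one_mul]
    _ = g * (antipode R h * x * (antipode R g * h)) := by
        rw [left_neg_eq_right_neg relation_antipode relation_mul]
    _ = g * antipode R h * x * (antipode R g * h) := by simp only [mul_assoc]

end IsSkewPrimitiveElem

theorem antipode_sq_iterate_of_skew_primitive_general [IsCancelAdd R] {g h x : A}
    (hg : IsGroupLikeElem R g) (hh : IsGroupLikeElem R h) (hx : IsSkewPrimitiveElem R g h x)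
    (n : ℕ) :
    (antipode R ∘ antipode R)^[n] x =
      (g * antipode R h) ^ n * x * (antipode R g * h) ^ n := by
  rw [← coe_antipodeSqAlgHom]
  exact iterate_map_eq_pow_mul_mul_pow (antipodeSqAlgHom R A)
    (hg.mul hh.antipode).antipode_antipode (hg.antipode.mul hh).antipode_antipode
    (hx.antipode_antipode hg hh) n

end SkewPrimitive

/-- If `g, h` are grouplike and `x` is `(g,h)`-primitive in a Hopf algebra
over a commutative ring, then `(S∘S)^n x = (g * S h)^n * x * (S g * h)^n` for all `n : ℕ`. -/
theorem antipode_sq_iterate_of_skew_primitive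
    (R : Type*) (H : Type*) [CommRing R] [Ring H] [HopfAlgebra R H]
    (g h : H) (hg : comul (R := R) g = g ⊗ₜ[R] g) (hg' : counit (R := R) g = 1)
    (hh : comul (R := R) h = h ⊗ₜ[R] h) (hh' : counit (R := R) h = 1)
    (x : H) (hx : comul (R := R) x = x ⊗ₜ[R] g + h ⊗ₜ[R] x) (n : ℕ) :
    (⇑(antipode (R := R) (A := H)) ∘ ⇑(antipode (R := R) (A := H)))^[n] x =
      (g * antipode (R := R) h) ^ n * x * (antipode (R := R) g * h) ^ n :=
  antipode_sq_iterate_of_skew_primitive_general ⟨hg', hg⟩ ⟨hh', hh⟩ hx n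
end

section
/- Let H be a Hopf algebra over a commutative ring with antipode S, let g, h ∈ H be grouplike elements, and let x ∈ H be (g,h)-primitive. If n is a natural number such that (g·S(h))^n = 1 and (S(g)·h)^n = 1, then (S∘S)^n (x) = x. -/
open Coalgebra HopfAlgebra TensorProduct

/-!
Write `u = g * S h` and `v = S g * h`. For a `(g, h)`-primitive `x`, the antipode identity
`∑ x₁ * S x₂ = ε x` reads `x * S g + h * S x = ε x`. This relation and its image under `S` show that
`u * x * v` and `S (S x)` are both additive inverses of `g * S x * h`, up to the terms `ε x • g` and
`ε x • h`, which `x` absorbs by the counit identities: `x + ε x • g = x = x + ε x • h`. Hence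
`S (S x) = u * x * v`; no subtraction is involved, so this holds over semirings. Since `S ∘ S` is
multiplicative and fixes the grouplike elements `u` and `v`, iterating gives `u ^ n * x * v ^ n`.
-/

/-- The element `x` of a coalgebra is `(g, h)`-primitive. The elements `g` and `h` are arbitrary
here; that they are grouplike is a separate hypothesis wherever it matters. -/
structure IsSkewPrimitive (R : Type*) {C : Type*} [CommSemiring R] [AddCommMonoid C] [Module R C]
    [Coalgebra R C] (g h x : C) : Prop where
  comul_eq : comul (R := R) x = x ⊗ₜ[R] g + h ⊗ₜ[R] x

namespace IsSkewPrimitive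

section Coalgebra

variable {R C : Type*} [CommSemiring R] [AddCommMonoid C] [Module R C] [Coalgebra R C] {g h x : C}

lemma counit_left_smul_add_counit_smul (hx : IsSkewPrimitive R g h x) :
    counit (R := R) g • x + counit (R := R) x • h = x := by
  simpa [hx.comul_eq] using congr(TensorProduct.rid R C $(lTensor_counit_comul (R := R) x))

lemma counit_smul_add_counit_right_smul (hx : IsSkewPrimitive R g h x) :
    counit (R := R) x • g + counit (R := R) h • x = x := by
  simpa [hx.comul_eq] using congr(TensorProduct.lid R C $(rTensor_counit_comul (R := R) x))

lemma add_counit_smul_right (hg : IsGroupLikeElem R g) (hx : IsSkewPrimitive R g h x) :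
    x + counit (R := R) x • h = x := by
  simpa only [hg.counit_eq_one, one_smul] using hx.counit_left_smul_add_counit_smul

lemma add_counit_smul_left (hh : IsGroupLikeElem R h) (hx : IsSkewPrimitive R g h x) :
    x + counit (R := R) x • g = x := by
  simpa only [hh.counit_eq_one, one_smul, add_comm] using hx.counit_smul_add_counit_right_smul

end Coalgebra

end IsSkewPrimitive

section HopfAlgebra

variable {R H : Type*} [CommSemiring R] [Semiring H] [HopfAlgebra R H] {g h x : H}

lemma antipode_antipode_mul (a b : H) :
    antipode R (antipode R (a * b)) = antipode R (antipode R a) * antipode R (antipode R b) := by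
  simp only [antipode_mul_antidistrib]

lemma antipode_mul_pow_eq_one (hg : IsGroupLikeElem R g) (hh : IsGroupLikeElem R h) {n : ℕ}
    (hgh : (g * antipode R h) ^ n = 1) : (antipode R g * h) ^ n = 1 := by
  let a : GroupLike R H := ⟨g, hg⟩
  let b : GroupLike R H := ⟨h, hh⟩
  have hab : (a * b⁻¹) ^ n = 1 := GroupLike.val_injective hgh
  have hconj : a⁻¹ * b = a⁻¹ * (a * b⁻¹)⁻¹ * a⁻¹⁻¹ := by group
  have hba : (a⁻¹ * b) ^ n = 1 := by rw [hconj, conj_pow, inv_pow, hab]; group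
  exact congr(($hba).val)

namespace IsSkewPrimitive

lemma mul_antipode_add_mul_antipode (hx : IsSkewPrimitive R g h x) :
    x * antipode R g + h * antipode R x = counit (R := R) x • 1 := by
  simpa [hx.comul_eq, Algebra.algebraMap_eq_smul_one, -mul_antipode_lTensor_comul_apply] using
    mul_antipode_lTensor_comul_apply (R := R) x

lemma conj_add_mul_antipode_mul (hh : IsGroupLikeElem R h) (hx : IsSkewPrimitive R g h x) :
    g * antipode R h * x * (antipode R g * h) + g * antipode R x * h =
      counit (R := R) x • g :=
  have cancel_h : antipode R h * (h * (antipode R x * h)) = antipode R x * h := by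
    rw [← mul_assoc, hh.antipode_mul_cancel, one_mul]
  calc
    _ = g * antipode R h * (x * antipode R g + h * antipode R x) * h := by
      simp only [mul_add, add_mul, mul_assoc, cancel_h]
    _ = counit (R := R) x • g := by
      rw [hx.mul_antipode_add_mul_antipode]
      simp [mul_assoc, hh.antipode_mul_cancel]

lemma antipode_antipode_add_mul_antipode_mul (hg : IsGroupLikeElem R g)
    (hh : IsGroupLikeElem R h) (hx : IsSkewPrimitive R g h x) :
    antipode R (antipode R x) + g * antipode R x * h = counit (R := R) x • h := by
  have hSx : g * antipode R x + antipode R (antipode R x) * antipode R h =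
      counit (R := R) x • 1 := by
    simpa only [map_add, map_smul, antipode_mul_antidistrib, antipode_one, hg.antipode_antipode]
      using congr(antipode R $(hx.mul_antipode_add_mul_antipode))
  simpa [add_mul, mul_assoc, hh.antipode_mul_cancel, add_comm] using congr($hSx * h)

theorem antipode_antipode (hg : IsGroupLikeElem R g) (hh : IsGroupLikeElem R h)
    (hx : IsSkewPrimitive R g h x) :
    antipode R (antipode R x) = g * antipode R h * x * (antipode R g * h) := by
  set u := g * antipode R h
  set v := antipode R g * h
  set w := g * antipode R x * h
  have absorb_sq : antipode R (antipode R x) + counit (R := R) x • g =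
      antipode R (antipode R x) := by
    simpa only [map_add, map_smul, hg.antipode_antipode] using
      congr(antipode R (antipode R $(hx.add_counit_smul_left hh)))
  have conj_h : u * h * v = h := by
    rw [mul_assoc g, hh.antipode_mul_cancel, mul_one, ← mul_assoc, hg.mul_antipode_cancel, one_mul]
  have absorb_conj : u * x * v + counit (R := R) x • h = u * x * v := by
    simpa only [mul_add, add_mul, mul_smul_comm, smul_mul_assoc, conj_h] using
      congr(u * $(hx.add_counit_smul_right hg) * v)
  calc
    antipode R (antipode R x) = antipode R (antipode R x) + counit (R := R) x • g := absorb_sq.symm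
    _ = antipode R (antipode R x) + (u * x * v + w) := by rw [hx.conj_add_mul_antipode_mul hh]
    _ = u * x * v + (antipode R (antipode R x) + w) := add_left_comm ..
    _ = u * x * v + counit (R := R) x • h := by
      rw [hx.antipode_antipode_add_mul_antipode_mul hg hh]
    _ = u * x * v := absorb_conj

theorem antipode_sq_iterate (hg : IsGroupLikeElem R g) (hh : IsGroupLikeElem R h)
    (hx : IsSkewPrimitive R g h x) (n : ℕ) :
    (antipode R (A := H) ∘ antipode R (A := H))^[n] x =
      (g * antipode R h) ^ n * x * (antipode R g * h) ^ n := by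
  have hu := hg.mul hh.antipode
  have hv := hg.antipode.mul hh
  induction n with
  | zero => simp
  | succ n ih =>
    rw [Function.iterate_succ_apply', ih, Function.comp_apply, antipode_antipode_mul,
      antipode_antipode_mul, hu.pow.antipode_antipode, hv.pow.antipode_antipode,
      hx.antipode_antipode hg hh, pow_succ (g * _), pow_succ' (_ * h)]
    simp only [mul_assoc]

end IsSkewPrimitive

theorem antipode_sq_iterate_eq_id_of_skew_primitive_general (hg : IsGroupLikeElem R g)
    (hh : IsGroupLikeElem R h) (hx : IsSkewPrimitive R g h x) {n : ℕ}
    (hgh : (g * antipode R h) ^ n = 1) :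
    (antipode R (A := H) ∘ antipode R (A := H))^[n] x = x := by
  rw [hx.antipode_sq_iterate hg hh, hgh, antipode_mul_pow_eq_one hg hh hgh, one_mul, mul_one]

end HopfAlgebra

/-- If `g, h` are grouplike, `x` is `(g,h)`-primitive, and
`(g * S h)^n = 1` and `(S g * h)^n = 1`, then `(S∘S)^n x = x`. -/
theorem antipode_sq_iterate_eq_id_of_skew_primitive
    (R : Type*) (H : Type*) [CommRing R] [Ring H] [HopfAlgebra R H]
    (g h : H) (hg : comul (R := R) g = g ⊗ₜ[R] g) (hg' : counit (R := R) g = 1)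
    (hh : comul (R := R) h = h ⊗ₜ[R] h) (hh' : counit (R := R) h = 1)
    (x : H) (hx : comul (R := R) x = x ⊗ₜ[R] g + h ⊗ₜ[R] x) (n : ℕ)
    (hgh : (g * antipode (R := R) h) ^ n = 1) (hgh' : (antipode (R := R) g * h) ^ n = 1) :
    (⇑(antipode (R := R) (A := H)) ∘ ⇑(antipode (R := R) (A := H)))^[n] x = x :=
  antipode_sq_iterate_eq_id_of_skew_primitive_general ⟨hg', hg⟩ ⟨hh', hh⟩ ⟨hx⟩ hgh
end

section
/- Let H be a Hopf algebra over a field k, let D : H → H be a bialgebra automorphism with D^m = id, and let r ∈ k be an element of multiplicative order 2m if m is even and of order m if m is odd; set q = r². Suppose that for each i with 0 ≤ i ≤ m-1 there are subspaces V_{+,i} and V_{-,i} with V_{+,i} ⊕ V_{-,i} = E_{D,q^i}, that H is the direct sum of all the V_{+,i} and V_{-,i}, and let σ : H → H be the k-linear map acting as multiplication by r^i on V_{+,i} and by -r^i on V_{-,i}. If the subspaces V_{±,i} simultaneously satisfy: (i) 1 ∈ V_{+,0} and the multiplicative inclusions (for 0 ≤ i+j ≤ m-1: V_{+,i}·V_{+,j}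 + V_{-,i}·V_{-,j} ⊆ V_{+,i+j} and V_{+,i}·V_{-,j} + V_{-,i}·V_{+,j} ⊆ V_{-,i+j}; for m ≤ i+j ≤ 2m-2 the same inclusions into V_{∓,i+j-m} with the signs exchanged when m is even and preserved when m is odd), and (ii) ε(V_{-,0}) = 0 and the comultiplicative inclusions (Δ(V_{±,i}) contained in the corresponding sums of tensor products of the V_{±,a} ⊗ V_{±,b} over a + b = i and a + b = i + m, with parity of signs matching σ and with the extra sign twist for a + b = i + m when m is even), then σ is a bialgebra automorphism of H and σ ∘ σ = D. -/
open Coalgebra HopfAlgebra TensorProduct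

variable {k H : Type*}

/-- For submodules `U V` of `H`, the image of `U ⊗[k] V` in `H ⊗[k] H`. -/
noncomputable def Submodule.tmul [Field k] [AddCommGroup H] [Module k H]
    (U V : Submodule k H) : Submodule k (TensorProduct k H H) :=
  LinearMap.range (TensorProduct.mapIncl U V)

/-!
Write `V` for any of the subspaces `V_{±,i}` and `μ = ±r^i` for its scalar. Since `r ^ m` is `-1`
for even `m` and `1` for odd `m`, the sign rules of the hypotheses put `V · V'` in the
`μ μ'`-eigenspace of `σ`, and `Δ V` in the `μ`-eigenspace of `σ ⊗ σ`. As the `V` span `H`, `σ`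
respects products and coproducts. Moreover `μ ^ (2 * m) = 1` makes `σ` bijective, and a bijection
that respects products and coproducts respects the unit and the counit, these being unique.
Finally `σ ∘ σ = D` because `μ ^ 2 = q ^ i`.
-/

section EigenspaceFamilies

theorem linearMap_ext_of_iSup_eq_top {R M N ι : Type*} [Semiring R] [AddCommMonoid M] [Module R M]
    [AddCommMonoid N] [Module R N] {V : ι → Submodule R M} (hV : ⨆ i, V i = ⊤) {f g : M →ₗ[R] N}
    (h : ∀ i, Set.EqOn f g (V i)) : f = g :=
  LinearMap.eqLocus_eq_top.1 (top_le_iff.1 (hV ▸ iSup_le h))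

variable {R M ι : Type*} [CommRing R] [AddCommGroup M] [Module R M]

theorem end_ext_of_le_eigenspace {V : ι → Submodule R M} (hV : ⨆ i, V i = ⊤)
    {f g : Module.End R M} {μ : ι → R} (hf : ∀ i, V i ≤ f.eigenspace (μ i))
    (hg : ∀ i, V i ≤ g.eigenspace (μ i)) : f = g :=
  linearMap_ext_of_iSup_eq_top hV fun i _ hx ↦
    (Module.End.mem_eigenspace_iff.1 (hf i hx)).trans
      (Module.End.mem_eigenspace_iff.1 (hg i hx)).symm

theorem eigenspace_le_eigenspace_pow (f : Module.End R M) (μ : R) (n : ℕ) :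
    f.eigenspace μ ≤ (f ^ n).eigenspace (μ ^ n) := by
  intro x hx
  rw [Module.End.mem_eigenspace_iff] at hx ⊢
  induction n with
  | zero => simp
  | succ n ih => rw [pow_succ, Module.End.mul_apply, hx, map_smul, ih, smul_smul, pow_succ']

theorem end_pow_eq_one_of_le_eigenspace {V : ι → Submodule R M} (hV : ⨆ i, V i = ⊤)
    {f : Module.End R M} {μ : ι → R} (hf : ∀ i, V i ≤ f.eigenspace (μ i)) {n : ℕ}
    (hμ : ∀ i, μ i ^ n = 1) : f ^ n = 1 :=
  end_ext_of_le_eigenspace hV (μ := 1)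
    (fun i ↦ (hf i).trans (by simpa [hμ i] using eigenspace_le_eigenspace_pow f (μ i) n))
    fun _ _ _ ↦ Module.End.mem_eigenspace_iff.2 (by simp)

theorem map_mul_of_mul_le_eigenspace {A : Type*} [Ring A] [Algebra R A]
    {V : ι → Submodule R A} (hV : ⨆ i, V i = ⊤) {σ : Module.End R A} {μ : ι → R}
    (hσ : ∀ i, V i ≤ σ.eigenspace (μ i))
    (hmul : ∀ i j, V i * V j ≤ σ.eigenspace (μ i * μ j)) (x y : A) :
    σ (x * y) = σ x * σ y := by
  suffices h : (LinearMap.mul R A).compr₂ σ = (LinearMap.mul R A).compl₁₂ σ σ from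
    LinearMap.congr_fun₂ h x y
  refine linearMap_ext_of_iSup_eq_top hV fun i x hx ↦
    linearMap_ext_of_iSup_eq_top hV fun j y hy ↦ ?_
  have hσx := Module.End.mem_eigenspace_iff.1 (hσ i hx)
  have hσy := Module.End.mem_eigenspace_iff.1 (hσ j hy)
  have hσxy := Module.End.mem_eigenspace_iff.1 (hmul i j (Submodule.mul_mem_mul hx hy))
  simp only [LinearMap.compr₂_apply, LinearMap.compl₁₂_apply, LinearMap.mul_apply', hσx, hσy,
    hσxy, smul_mul_smul_comm]

theorem map_comp_comul_of_map_comul_le_eigenspace {C : Type*} [AddCommGroup C] [Module R C]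
    [CoalgebraStruct R C] {V : ι → Submodule R C} (hV : ⨆ i, V i = ⊤) {σ : Module.End R C}
    {μ : ι → R} (hσ : ∀ i, V i ≤ σ.eigenspace (μ i))
    (hcomul : ∀ i, (V i).map (comul (R := R)) ≤
      Module.End.eigenspace (TensorProduct.map σ σ) (μ i)) :
    TensorProduct.map σ σ ∘ₗ comul (R := R) = comul (R := R) ∘ₗ σ := by
  refine linearMap_ext_of_iSup_eq_top hV fun i x hx ↦ ?_
  have hσx := Module.End.mem_eigenspace_iff.1 (hσ i hx)
  have hΔx := Module.End.mem_eigenspace_iff.1 (hcomul i (Submodule.mem_map_of_mem hx))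
  rw [LinearMap.comp_apply, LinearMap.comp_apply, hΔx, hσx, map_smul]

end EigenspaceFamilies

section Bijections

variable {R : Type*} [CommSemiring R]

theorem map_one_of_surjective_of_map_mul {A B : Type*} [MulOneClass A] [MulOneClass B] {f : A → B}
    (hf : Function.Surjective f) (hmul : ∀ x y, f (x * y) = f x * f y) : f 1 = 1 := by
  obtain ⟨x, hx⟩ := hf 1
  rw [← mul_one (f 1), ← hx, ← hmul, one_mul]

/- The pullback `ε'` along `f` of the counit of `C'` is a left counit of `C`, so evaluating
`ε' ⊗ ε` on `Δ x` gives both `ε' x` and `ε x`. -/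
theorem counit_comp_of_injective_of_map_comp_comul {C C' : Type*} [AddCommMonoid C] [Module R C]
    [Coalgebra R C] [AddCommMonoid C'] [Module R C'] [Coalgebra R C'] {f : C →ₗ[R] C'}
    (hf : Function.Injective f)
    (hcomul : TensorProduct.map f f ∘ₗ comul (R := R) = comul (R := R) ∘ₗ f) :
    counit (R := R) ∘ₗ f = counit (R := R) := by
  ext x
  obtain ⟨s, a, b, hab⟩ := ℛ R x
  have hleft : ∑ i ∈ s, counit (R := R) (f (a i)) • b i = x := by
    apply hf
    simpa using sum_counit_smul (R := R) (a := f x) ⟨s, f ∘ a, f ∘ b, by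
      simpa [← hab] using LinearMap.congr_fun hcomul x⟩
  have hright : ∑ i ∈ s, counit (R := R) (b i) • a i = x := by
    simpa [← hab, map_sum] using
      congrArg (TensorProduct.rid R C) (lTensor_counit_comul (R := R) x)
  calc counit (R := R) (f x)
      = ∑ i ∈ s, counit (R := R) (b i) * counit (R := R) (f (a i)) := by
        conv_lhs => rw [← hright]
        simp
    _ = counit (R := R) x := by
        conv_rhs => rw [← hleft]
        simp [mul_comm]

theorem exists_bialgEquiv_of_bijective {A B : Type*} [Semiring A] [Bialgebra R A] [Semiring B]
    [Bialgebra R B] (f : A →ₗ[R] B) (hf : Function.Bijective f)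
    (hmul : ∀ x y, f (x * y) = f x * f y)
    (hcomul : TensorProduct.map f f ∘ₗ comul (R := R) = comul (R := R) ∘ₗ f) :
    ∃ f' : A ≃ₐc[R] B, ∀ x, f' x = f x :=
  let φ : A →ₐ[R] B :=
    AlgHom.ofLinearMap f (map_one_of_surjective_of_map_mul hf.surjective hmul) hmul
  have hcounit := counit_comp_of_injective_of_map_comp_comul hf.injective hcomul
  ⟨BialgEquiv.ofBijective (BialgHom.ofAlgHom φ (AlgHom.ext (LinearMap.congr_fun hcounit))
    (AlgHom.ext (LinearMap.congr_fun hcomul))) hf, fun _ ↦ rfl⟩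

end Bijections

section SignedFamilies

variable {R M : Type*} [CommRing R] [AddCommGroup M] [Module R M] {m : ℕ} {r : R}

theorem pow_eq_ite_of_isPrimitiveRoot [NoZeroDivisors R] (hm : 0 < m)
    (hr : IsPrimitiveRoot r (if Even m then 2 * m else m)) :
    r ^ m = if Even m then -1 else 1 := by
  split_ifs at hr ⊢
  · exact (hr.pow (by omega) (mul_comm 2 m)).eq_neg_one_of_two_right
  · exact hr.pow_eq_one

theorem pow_add_eq_ite (hr : r ^ m = if Even m then -1 else 1) (i : ℕ) :
    r ^ (i + m) = if Even m then -r ^ i else r ^ i := by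
  rw [pow_add, hr]
  split_ifs <;> simp

/-- The scalar `±r^i` by which the square root acts on `V_{±,i}`. A signed index is a pair `(i, s)`,
where `s = true` stands for the sign `+`. -/
def signedPow (r : R) (p : Fin m × Bool) : R :=
  if p.2 then r ^ (p.1 : ℕ) else -r ^ (p.1 : ℕ)

/-- The subspaces `V_{±,i}` as a single family over the signed indices of `signedPow`. -/
def signedFamily (Vp Vm : ℕ → Submodule R M) (p : Fin m × Bool) : Submodule R M :=
  if p.2 then Vp p.1 else Vm p.1

theorem signedPow_sq (r : R) (p : Fin m × Bool) : signedPow r p ^ 2 = (r ^ 2) ^ (p.1 : ℕ) := by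
  unfold signedPow
  split_ifs <;> ring

theorem signedPow_pow_two_mul (hr : r ^ m = if Even m then -1 else 1) (p : Fin m × Bool) :
    signedPow r p ^ (2 * m) = 1 :=
  calc signedPow r p ^ (2 * m)
      = ((r ^ m) ^ 2) ^ (p.1 : ℕ) := by
        rw [pow_mul, signedPow_sq]
        ring
    _ = 1 := by
        rw [hr]
        split_ifs <;> simp

theorem signedFamily_le_eigenspace {Vp Vm : ℕ → Submodule R M} {σ : Module.End R M}
    (hp : ∀ i < m, Vp i ≤ σ.eigenspace (r ^ i)) (hn : ∀ i < m, Vm i ≤ σ.eigenspace (-r ^ i)) :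
    ∀ p : Fin m × Bool, signedFamily Vp Vm p ≤ σ.eigenspace (signedPow r p)
  | (i, true) => hp i i.2
  | (i, false) => hn i i.2

end SignedFamilies

section SignedProducts

variable {R A : Type*} [CommRing R] [Ring A] [Algebra R A] {m : ℕ} {r : R}
  {Vp Vm : ℕ → Submodule R A} {σ : Module.End R A}

/-- The sign rules for products: on top of the grading by `ℤ/m` and by the sign, going past degree
`m` exchanges the two signs when `m` is even. -/
def IsSignedMultiplicative (m : ℕ) (Vp Vm : ℕ → Submodule R A) : Prop :=
  ∀ i j : ℕ, i < m → j < m →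
    (i + j ≤ m - 1 →
      (Vp i * Vp j ⊔ Vm i * Vm j ≤ Vp (i + j)) ∧
      (Vp i * Vm j ⊔ Vm i * Vp j ≤ Vm (i + j))) ∧
    (m ≤ i + j →
      (Even m →
        (Vp i * Vp j ⊔ Vm i * Vm j ≤ Vm (i + j - m)) ∧
        (Vp i * Vm j ⊔ Vm i * Vp j ≤ Vp (i + j - m))) ∧
      (¬ Even m →
        (Vp i * Vp j ⊔ Vm i * Vm j ≤ Vp (i + j - m)) ∧
        (Vp i * Vm j ⊔ Vm i * Vp j ≤ Vm (i + j - m))))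

theorem sup_mul_le_eigenspace (hr : r ^ m = if Even m then -1 else 1)
    (hp : ∀ i < m, Vp i ≤ σ.eigenspace (r ^ i)) (hn : ∀ i < m, Vm i ≤ σ.eigenspace (-r ^ i))
    (hmul : IsSignedMultiplicative m Vp Vm) {i j : ℕ} (hi : i < m) (hj : j < m) :
    Vp i * Vp j ⊔ Vm i * Vm j ≤ σ.eigenspace (r ^ (i + j)) ∧
      Vp i * Vm j ⊔ Vm i * Vp j ≤ σ.eigenspace (-r ^ (i + j)) := by
  obtain ⟨hsmall, hlarge⟩ := hmul i j hi hj
  obtain hlt | hge := lt_or_ge (i + j) m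
  · exact (hsmall (by omega)).imp (·.trans (hp _ hlt)) (·.trans (hn _ hlt))
  · have hwrap := pow_add_eq_ite hr (i + j - m)
    rw [Nat.sub_add_cancel hge] at hwrap
    have hlt : i + j - m < m := by omega
    rw [hwrap]
    split_ifs with hm
    · rw [neg_neg]
      exact ((hlarge hge).1 hm).imp (·.trans (hn _ hlt)) (·.trans (hp _ hlt))
    · exact ((hlarge hge).2 hm).imp (·.trans (hp _ hlt)) (·.trans (hn _ hlt))

theorem signedFamily_mul_le_eigenspace (hr : r ^ m = if Even m then -1 else 1)
    (hp : ∀ i < m, Vp i ≤ σ.eigenspace (r ^ i)) (hn : ∀ i < m, Vm i ≤ σ.eigenspace (-r ^ i))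
    (hmul : IsSignedMultiplicative m Vp Vm) (p q : Fin m × Bool) :
    signedFamily Vp Vm p * signedFamily Vp Vm q ≤
      σ.eigenspace (signedPow r p * signedPow r q) := by
  obtain ⟨⟨i, hi⟩, s⟩ := p
  obtain ⟨⟨j, hj⟩, t⟩ := q
  obtain ⟨hsame, hopp⟩ := sup_mul_le_eigenspace hr hp hn hmul hi hj
  obtain ⟨hpp, hmm⟩ := sup_le_iff.1 hsame
  obtain ⟨hpm, hmp⟩ := sup_le_iff.1 hopp
  cases s <;> cases t <;> simpa [signedFamily, signedPow, ← pow_add]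

end SignedProducts

section TwistedDegrees

variable {R M : Type*} [CommRing R] [AddCommGroup M] [Module R M] {m : ℕ}

/-- The part of degree `i` of a family `W` indexed by pairs of degrees, where the pairs of total
degree `i + m` also contribute, through the family `W'` of opposite sign when `m` is even. -/
def twistedDegreePart (W W' : Fin m × Fin m → Submodule R M) (i : ℕ) : Submodule R M :=
  (⨆ (p : Fin m × Fin m) (_ : (p.1 : ℕ) + (p.2 : ℕ) = i), W p) ⊔
    (⨆ (p : Fin m × Fin m) (_ : (p.1 : ℕ) + (p.2 : ℕ) = i + m), if Even m then W' p else W p)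

theorem twistedDegreePart_le_eigenspace {r : R} (hr : r ^ m = if Even m then -1 else 1)
    {τ : Module.End R M} (c : R) {W W' : Fin m × Fin m → Submodule R M}
    (hW : ∀ p, W p ≤ τ.eigenspace (c * r ^ (p.1 + p.2 : ℕ)))
    (hW' : ∀ p, W' p ≤ τ.eigenspace (-(c * r ^ (p.1 + p.2 : ℕ)))) (i : ℕ) :
    twistedDegreePart W W' i ≤ τ.eigenspace (c * r ^ i) := by
  refine sup_le (iSup₂_le fun p hpi ↦ hpi ▸ hW p) (iSup₂_le fun p hpi ↦ ?_)
  have hWp := hW p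
  have hWp' := hW' p
  rw [hpi, pow_add_eq_ite hr] at hWp hWp'
  split_ifs with hm
  · simpa [hm] using hWp'
  · simpa [hm] using hWp

end TwistedDegrees

section SignedTensors

variable [Field k] [AddCommGroup H] [Module k H] {m : ℕ} {r : k} {Vp Vm : ℕ → Submodule k H}
  {σ : Module.End k H}

/-- The sign rules for coproducts, dual to `IsSignedMultiplicative`. -/
def IsSignedComultiplicative [CoalgebraStruct k H] (m : ℕ) (Vp Vm : ℕ → Submodule k H) : Prop :=
  (∀ i < m, (Vp i).map (comul (R := k)) ≤ twistedDegreePart (m := m)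
    (fun p ↦ (Vp p.1).tmul (Vp p.2) ⊔ (Vm p.1).tmul (Vm p.2))
    (fun p ↦ (Vp p.1).tmul (Vm p.2) ⊔ (Vm p.1).tmul (Vp p.2)) i) ∧
  (∀ i < m, (Vm i).map (comul (R := k)) ≤ twistedDegreePart (m := m)
    (fun p ↦ (Vp p.1).tmul (Vm p.2) ⊔ (Vm p.1).tmul (Vp p.2))
    (fun p ↦ (Vp p.1).tmul (Vp p.2) ⊔ (Vm p.1).tmul (Vm p.2)) i)

theorem tmul_le_eigenspace {U V : Submodule k H} {a b : k} (hU : U ≤ σ.eigenspace a)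
    (hV : V ≤ σ.eigenspace b) :
    U.tmul V ≤ Module.End.eigenspace (TensorProduct.map σ σ) (a * b) := by
  rintro _ ⟨t, rfl⟩
  induction t with
  | zero => simp
  | add s t hs ht => exact map_add (TensorProduct.mapIncl U V) s t ▸ add_mem hs ht
  | tmul x y =>
    have hx := Module.End.mem_eigenspace_iff.1 (hU x.2)
    have hy := Module.End.mem_eigenspace_iff.1 (hV y.2)
    rw [Module.End.mem_eigenspace_iff, TensorProduct.mapIncl, TensorProduct.map_tmul,
      TensorProduct.map_tmul, Submodule.subtype_apply, Submodule.subtype_apply, hx, hy,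
      TensorProduct.smul_tmul_smul]

theorem sup_tmul_le_eigenspace (hp : ∀ i < m, Vp i ≤ σ.eigenspace (r ^ i))
    (hn : ∀ i < m, Vm i ≤ σ.eigenspace (-r ^ i)) (p : Fin m × Fin m) :
    (Vp p.1).tmul (Vp p.2) ⊔ (Vm p.1).tmul (Vm p.2) ≤
        Module.End.eigenspace (TensorProduct.map σ σ) (r ^ (p.1 + p.2 : ℕ)) ∧
      (Vp p.1).tmul (Vm p.2) ⊔ (Vm p.1).tmul (Vp p.2) ≤
        Module.End.eigenspace (TensorProduct.map σ σ) (-r ^ (p.1 + p.2 : ℕ)) := by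
  have hp₁ := hp p.1 p.1.2
  have hp₂ := hp p.2 p.2.2
  have hn₁ := hn p.1 p.1.2
  have hn₂ := hn p.2 p.2.2
  rw [pow_add]
  refine ⟨sup_le (tmul_le_eigenspace hp₁ hp₂) ?_, sup_le ?_ ?_⟩
  · simpa using tmul_le_eigenspace hn₁ hn₂
  · simpa using tmul_le_eigenspace hp₁ hn₂
  · simpa using tmul_le_eigenspace hn₁ hp₂

theorem map_comul_signedFamily_le_eigenspace [CoalgebraStruct k H]
    (hr : r ^ m = if Even m then -1 else 1)
    (hp : ∀ i < m, Vp i ≤ σ.eigenspace (r ^ i)) (hn : ∀ i < m, Vm i ≤ σ.eigenspace (-r ^ i))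
    (hcomul : IsSignedComultiplicative m Vp Vm) (p : Fin m × Bool) :
    (signedFamily Vp Vm p).map (comul (R := k)) ≤
      Module.End.eigenspace (TensorProduct.map σ σ) (signedPow r p) := by
  have hsame p := (sup_tmul_le_eigenspace hp hn p).1
  have hopp p := (sup_tmul_le_eigenspace hp hn p).2
  obtain ⟨i, _ | _⟩ := p
  · refine (hcomul.2 i i.2).trans ?_
    simpa [signedPow] using twistedDegreePart_le_eigenspace hr (-1)
      (by simpa only [neg_one_mul] using hopp) (by simpa only [neg_one_mul, neg_neg] using hsame) i
  · refine (hcomul.1 i i.2).trans ?_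
    simpa [signedPow] using twistedDegreePart_le_eigenspace hr 1
      (by simpa only [one_mul] using hsame) (by simpa only [one_mul] using hopp) i

end SignedTensors

theorem sqrt_bialgebra_automorphism_general [Field k] [Ring H] [Bialgebra k H] (D : H →ₗ[k] H)
    (m : ℕ) (hm : 0 < m) (r : k) (hr : r ^ m = if Even m then -1 else 1)
    (Vp Vm : ℕ → Submodule k H)
    (hD : ∀ i < m, Vp i ⊔ Vm i ≤ Module.End.eigenspace D ((r ^ 2) ^ i))
    (hspan : ⨆ p : Fin m × Bool, (if p.2 then Vp (p.1 : ℕ) else Vm (p.1 : ℕ)) = ⊤)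
    (σ : H →ₗ[k] H)
    (hσp : ∀ i < m, ∀ x ∈ Vp i, σ x = r ^ i • x)
    (hσm : ∀ i < m, ∀ x ∈ Vm i, σ x = -(r ^ i • x))
    (hmul : IsSignedMultiplicative m Vp Vm) (hcomul : IsSignedComultiplicative m Vp Vm) :
    ∃ σ' : H ≃ₐc[k] H, (∀ x : H, σ' x = σ x) ∧ (∀ x : H, σ (σ x) = D x) := by
  have hp : ∀ i < m, Vp i ≤ Module.End.eigenspace σ (r ^ i) := fun i hi x hx ↦
    Module.End.mem_eigenspace_iff.2 (hσp i hi x hx)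
  have hn : ∀ i < m, Vm i ≤ Module.End.eigenspace σ (-r ^ i) := fun i hi x hx ↦
    Module.End.mem_eigenspace_iff.2 (by rw [hσm i hi x hx, neg_smul])
  have hV : ⨆ p : Fin m × Bool, signedFamily Vp Vm p = ⊤ := hspan
  have hσ : ∀ p : Fin m × Bool, signedFamily Vp Vm p ≤ Module.End.eigenspace σ (signedPow r p) :=
    signedFamily_le_eigenspace hp hn
  have hσmul := map_mul_of_mul_le_eigenspace hV hσ (signedFamily_mul_le_eigenspace hr hp hn hmul)
  have hσcomul := map_comp_comul_of_map_comul_le_eigenspace hV hσ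
    (map_comul_signedFamily_le_eigenspace hr hp hn hcomul)
  have hσpow := end_pow_eq_one_of_le_eigenspace hV hσ (signedPow_pow_two_mul hr)
  have hσbij := (Module.End.isUnit_iff σ).1 (IsUnit.of_pow_eq_one hσpow (by omega))
  have hsq : σ ^ 2 = D := end_ext_of_le_eigenspace hV (μ := fun p ↦ (r ^ 2) ^ (p.1 : ℕ))
    (fun p ↦ signedPow_sq r p ▸ (hσ p).trans (eigenspace_le_eigenspace_pow σ _ 2))
    (by
      rintro ⟨i, _ | _⟩
      exacts [le_sup_right.trans (hD i i.2), le_sup_left.trans (hD i i.2)])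
  obtain ⟨σ', hσ'⟩ := exists_bialgEquiv_of_bijective σ hσbij hσmul hσcomul
  exact ⟨σ', hσ', fun x ↦ by rw [← hsq, sq, Module.End.mul_apply]⟩

/-- (Corollary: square roots of bialgebra automorphisms of a Hopf
algebra.)  If the splitting subspaces `V_{±,i}` simultaneously satisfy the multiplicative
and comultiplicative conditions of the algebra and coalgebra square-root theorems, then
the map `σ` acting by `±r^i` on `V_{±,i}` is a bialgebra automorphism of `H` with
`σ ∘ σ = D`. -/
theorem sqrt_bialgebra_automorphism
    [Field k] [Ring H] [HopfAlgebra k H]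
    (D : H →ₗ[k] H) (hbij : Function.Bijective D)
    (hD1 : D 1 = 1) (hDmul : ∀ x y : H, D (x * y) = D x * D y)
    (hDcounit : ∀ x : H, counit (R := k) (D x) = counit (R := k) x)
    (hDcomul : ∀ x : H, comul (R := k) (D x) = TensorProduct.map D D (comul (R := k) x))
    (m : ℕ) (hm : 0 < m) (hDm : (D ^ m : Module.End k H) = 1)
    (r : k) (hr : IsPrimitiveRoot r (if Even m then 2 * m else m))
    (q : k) (hq : q = r ^ 2)
    (Vp Vm : ℕ → Submodule k H)
    (hdisj : ∀ i < m, Disjoint (Vp i) (Vm i))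
    (hsup : ∀ i < m, Vp i ⊔ Vm i = Module.End.eigenspace D (q ^ i))
    (hinternal : DirectSum.IsInternal
      (fun p : Fin m × Bool => if p.2 then Vp (p.1 : ℕ) else Vm (p.1 : ℕ)))
    (σ : H →ₗ[k] H)
    (hσp : ∀ i < m, ∀ x ∈ Vp i, σ x = r ^ i • x)
    (hσm : ∀ i < m, ∀ x ∈ Vm i, σ x = -(r ^ i • x))
    -- (i) the multiplicative conditions
    (hone : (1 : H) ∈ Vp 0)
    (hmul : ∀ i j : ℕ, i < m → j < m →
      (i + j ≤ m - 1 →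
        (Vp i * Vp j ⊔ Vm i * Vm j ≤ Vp (i + j)) ∧
        (Vp i * Vm j ⊔ Vm i * Vp j ≤ Vm (i + j))) ∧
      (m ≤ i + j →
        (Even m →
          (Vp i * Vp j ⊔ Vm i * Vm j ≤ Vm (i + j - m)) ∧
          (Vp i * Vm j ⊔ Vm i * Vp j ≤ Vp (i + j - m))) ∧
        (¬ Even m →
          (Vp i * Vp j ⊔ Vm i * Vm j ≤ Vp (i + j - m)) ∧
          (Vp i * Vm j ⊔ Vm i * Vp j ≤ Vm (i + j - m)))))
    -- (ii) the comultiplicative conditions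
    (hcounit : ∀ x ∈ Vm 0, counit (R := k) x = 0)
    (hcomulp : ∀ i : ℕ, i < m →
      Submodule.map (comul (R := k)) (Vp i) ≤
        (⨆ (p : Fin m × Fin m) (_ : (p.1 : ℕ) + (p.2 : ℕ) = i),
          (Submodule.tmul (Vp (p.1 : ℕ)) (Vp (p.2 : ℕ)) ⊔
           Submodule.tmul (Vm (p.1 : ℕ)) (Vm (p.2 : ℕ)))) ⊔
        (⨆ (p : Fin m × Fin m) (_ : (p.1 : ℕ) + (p.2 : ℕ) = i + m),
          if Even m then
            Submodule.tmul (Vp (p.1 : ℕ)) (Vm (p.2 : ℕ)) ⊔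
            Submodule.tmul (Vm (p.1 : ℕ)) (Vp (p.2 : ℕ))
          else
            Submodule.tmul (Vp (p.1 : ℕ)) (Vp (p.2 : ℕ)) ⊔
            Submodule.tmul (Vm (p.1 : ℕ)) (Vm (p.2 : ℕ))))
    (hcomulm : ∀ i : ℕ, i < m →
      Submodule.map (comul (R := k)) (Vm i) ≤
        (⨆ (p : Fin m × Fin m) (_ : (p.1 : ℕ) + (p.2 : ℕ) = i),
          (Submodule.tmul (Vp (p.1 : ℕ)) (Vm (p.2 : ℕ)) ⊔
           Submodule.tmul (Vm (p.1 : ℕ)) (Vp (p.2 : ℕ)))) ⊔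
        (⨆ (p : Fin m × Fin m) (_ : (p.1 : ℕ) + (p.2 : ℕ) = i + m),
          if Even m then
            Submodule.tmul (Vp (p.1 : ℕ)) (Vp (p.2 : ℕ)) ⊔
            Submodule.tmul (Vm (p.1 : ℕ)) (Vm (p.2 : ℕ))
          else
            Submodule.tmul (Vp (p.1 : ℕ)) (Vm (p.2 : ℕ)) ⊔
            Submodule.tmul (Vm (p.1 : ℕ)) (Vp (p.2 : ℕ)))) :
    ∃ σ' : H ≃ₐc[k] H, (∀ x : H, σ' x = σ x) ∧ (∀ x : H, σ (σ x) = D x) := by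
  subst hq
  exact sqrt_bialgebra_automorphism_general D m hm r (pow_eq_ite_of_isPrimitiveRoot hm hr) Vp Vm
    (fun i hi ↦ (hsup i hi).le) hinternal.submodule_iSup_eq_top σ hσp hσm hmul ⟨hcomulp, hcomulm⟩
end

section
/- Let H be a coalgebra over a field k with comultiplication Δ and counit ε, and let K and M be subspaces of H such that H = K ⊕ M (internal direct sum of k-subspaces) and Δ(M) ⊆ K ⊗ M + M ⊗ K (as subspaces of H ⊗_k H). Then ε(M) = 0, i.e. the counit vanishes on M. -/
open Coalgebra HopfAlgebra TensorProduct

variable {k H : Type*}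

section Slice

variable {R P Q : Type*} [CommSemiring R]
  [AddCommMonoid P] [AddCommMonoid Q] [Module R P] [Module R Q]

/-- The slice map `f ⊗ id : P ⊗ Q → Q` of a functional `f` on the left factor, with `R ⊗ Q`
identified with `Q`. For `f` the counit of a coalgebra it is a left inverse of `Δ`. -/
noncomputable def sliceLeft (f : Module.Dual R P) : P ⊗[R] Q →ₗ[R] Q :=
  TensorProduct.lid R Q ∘ₗ f.rTensor Q

/-- The slice map `id ⊗ g : P ⊗ Q → P` of a functional `g` on the right factor, with `P ⊗ R`
identified with `P`. For `g` the counit of a coalgebra it is a left inverse of `Δ`. -/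
noncomputable def sliceRight (g : Module.Dual R Q) : P ⊗[R] Q →ₗ[R] P :=
  TensorProduct.rid R P ∘ₗ g.lTensor P

@[simp]
theorem sliceLeft_tmul (f : Module.Dual R P) (p : P) (q : Q) :
    sliceLeft f (p ⊗ₜ[R] q) = f p • q := by
  simp [sliceLeft]

@[simp]
theorem sliceRight_tmul (g : Module.Dual R Q) (p : P) (q : Q) :
    sliceRight g (p ⊗ₜ[R] q) = g q • p := by
  simp [sliceRight]

theorem apply_sliceLeft_eq_apply_sliceRight (f : Module.Dual R P) (g : Module.Dual R Q)
    (t : P ⊗[R] Q) : g (sliceLeft f t) = f (sliceRight g t) := by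
  have : g ∘ₗ sliceLeft f = f ∘ₗ sliceRight g := TensorProduct.ext' fun p q ↦ by
    simp [mul_comm]
  exact LinearMap.congr_fun this t

theorem sliceLeft_mem (f : Module.Dual R P) {U : Submodule R P} {V : Submodule R Q}
    {t : P ⊗[R] Q} (ht : t ∈ LinearMap.range (TensorProduct.mapIncl U V)) :
    sliceLeft f t ∈ V := by
  have h : LinearMap.range (TensorProduct.mapIncl U V) ≤ V.comap (sliceLeft f) := by
    rw [TensorProduct.range_mapIncl, Submodule.map₂_le]
    intro u _ v hv
    simpa using V.smul_mem (f u) hv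
  exact h ht

theorem sliceRight_mem (g : Module.Dual R Q) {U : Submodule R P} {V : Submodule R Q}
    {t : P ⊗[R] Q} (ht : t ∈ LinearMap.range (TensorProduct.mapIncl U V)) :
    sliceRight g t ∈ U := by
  have h : LinearMap.range (TensorProduct.mapIncl U V) ≤ U.comap (sliceRight g) := by
    rw [TensorProduct.range_mapIncl, Submodule.map₂_le]
    intro u hu v _
    simpa using U.smul_mem (g v) hu
  exact h ht

end Slice

section Counit

variable {R C : Type*} [CommSemiring R] [AddCommMonoid C] [Module R C] [Coalgebra R C]

theorem sliceLeft_counit_comul (x : C) : sliceLeft (counit (R := R)) (comul (R := R) x) = x := by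
  simp [sliceLeft]

theorem sliceRight_counit_comul (x : C) : sliceRight (counit (R := R)) (comul (R := R) x) = x := by
  simp [sliceRight]

end Counit

/- Write `Δ x = a + b` with `a ∈ K ⊗ M` and `b ∈ M ⊗ K`. Both slices of `Δ x` by `ε` equal `x`,
which lies in `M`, so their components in `K`, namely `(ε ⊗ id) b` and `(id ⊗ ε) a`, vanish. Hence
`x = (ε ⊗ id) a` and `ε x = (ε ⊗ ε) a = ε ((id ⊗ ε) a) = 0`. -/
theorem counit_eq_zero_of_comul_mem_general {R C : Type*} [CommRing R] [AddCommGroup C]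
    [Module R C] [Coalgebra R C] {K M : Submodule R C} (hKM : Disjoint K M) {x : C} (hx : x ∈ M)
    (hΔx : comul (R := R) x ∈ LinearMap.range (TensorProduct.mapIncl K M) ⊔
      LinearMap.range (TensorProduct.mapIncl M K)) :
    counit (R := R) x = 0 := by
  obtain ⟨a, ha, b, hb, hab⟩ := Submodule.mem_sup.1 hΔx
  let ε : Module.Dual R C := counit
  have hleft : sliceLeft ε a + sliceLeft ε b = x := by
    rw [← map_add, hab, sliceLeft_counit_comul]
  have hright : sliceRight ε a + sliceRight ε b = x := by
    rw [← map_add, hab, sliceRight_counit_comul]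
  have hb_left : sliceLeft ε b = 0 :=
    Submodule.disjoint_def.1 hKM _ (sliceLeft_mem ε hb) <|
      (M.add_mem_iff_right (sliceLeft_mem ε ha)).1 (hleft ▸ hx)
  have ha_right : sliceRight ε a = 0 :=
    Submodule.disjoint_def.1 hKM _ (sliceRight_mem ε ha) <|
      (M.add_mem_iff_left (sliceRight_mem ε hb)).1 (hright ▸ hx)
  calc ε x = ε (sliceLeft ε a) := by rw [← hleft, hb_left, add_zero]
    _ = ε (sliceRight ε a) := apply_sliceLeft_eq_apply_sliceRight ε ε a
    _ = 0 := by rw [ha_right, map_zero]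

/-- If `H = K ⊕ M` is a coalgebra over a field `k` with
`Δ(M) ⊆ K ⊗ M + M ⊗ K`, then the counit vanishes on `M`. -/
theorem counit_eq_zero_of_comul_mem
    [Field k] [AddCommGroup H] [Module k H] [Coalgebra k H]
    (K M : Submodule k H) (hcompl : IsCompl K M)
    (hΔM : Submodule.map (comul (R := k)) M ≤ Submodule.tmul K M ⊔ Submodule.tmul M K) :
    ∀ x ∈ M, counit (R := k) x = 0 :=
  fun _ hx ↦ counit_eq_zero_of_comul_mem_general hcompl.disjoint hx
    (hΔM (Submodule.mem_map_of_mem hx))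
end
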